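/- Let μ^a, μ^b ∈ [0,1]^m, and let q ≥ 1. In the thresholding allocation model (with estimate variance m/q), for every fixed c > 0 the random variable g(c) = (e_a(c) − e'_a(c) − c·e_b(c) + c·e'_b(c))/(1+c) has the Gaussian distribution N(0, (m²/q)·(1+c²)/(1+c)²); consequently, with probability at least 1 − 2 m⁶ exp(−(log m)²/2), it holds simultaneously for all c in the grid C = {k/m³ : k = 1, …, m⁶} that |g(c)| ≤ (m/√q)·log m. -/

import Mathlib

/-!
Write `U_i = c v^a_i - v^b_i` and `W_i = v^a_i + c v^b_i`. Since `v^a_i` and `v^b_i` are independent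
Gaussians of equal variance, `U_i` and `W_i` are uncorrelated, hence independent. Now `x_i(c)` is a
sign depending only on `U_i`, and `W_i - E[W_i]` is a symmetric Gaussian, so multiplying the latter
by the former does not change its law. Therefore `(1 + c) g(c) = ∑ i, x_i(c) (W_i - E[W_i])` is a
sum of independent centered Gaussians. As `(1 + c²) / (1 + c)² ≤ 1` for `c ≥ 0`, each `g(c)` is
sub-Gaussian with parameter `m² / q`, and the grid is handled by a Chernoff and a union bound.
-/

open MeasureTheory ProbabilityTheory Real Filter
open scoped ENNReal NNReal Classical

noncomputable section

def envyAB {m : ℕ} (μa : Fin m → ℝ) (A : Finset (Fin m)) : ℝ :=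
  ∑ i ∈ Aᶜ, μa i - ∑ i ∈ A, μa i

def envyBA {m : ℕ} (μb : Fin m → ℝ) (A : Finset (Fin m)) : ℝ :=
  ∑ i ∈ A, μb i - ∑ i ∈ Aᶜ, μb i

def envy {m : ℕ} (μa μb : Fin m → ℝ) (A : Finset (Fin m)) : ℝ :=
  max (envyAB μa A) (envyBA μb A)

def optEnvy {m : ℕ} (μa μb : Fin m → ℝ) : ℝ :=
  ⨅ A : Finset (Fin m), envy μa μb A

/-- The joint law of the `2m` independent Gaussian estimates in the thresholding allocation
model: `ω (i, true) = v^a_i ~ N(μ^a_i, m/q)` and `ω (i, false) = v^b_i ~ N(μ^b_i, m/q)`. -/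
def threshMeasure (m q : ℕ) (μa μb : Fin m → ℝ) : Measure ((Fin m × Bool) → ℝ) :=
  Measure.pi fun p => gaussianReal (if p.2 then μa p.1 else μb p.1) ((m : ℝ≥0) / (q : ℝ≥0))

/-- `x_i(c) = 1` if `c v^a_i − v^b_i > 0` and `x_i(c) = −1` otherwise. -/
def xSign {m : ℕ} (c : ℝ) (ω : (Fin m × Bool) → ℝ) (i : Fin m) : ℝ :=
  if 0 < c * ω (i, true) - ω (i, false) then 1 else -1

/-- `e_a(c) = −∑ i x_i(c) μ^a_i`. -/
def eA {m : ℕ} (μa : Fin m → ℝ) (c : ℝ) (ω : (Fin m × Bool) → ℝ) : ℝ :=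
  -∑ i, xSign c ω i * μa i

/-- `e_b(c) = ∑ i x_i(c) μ^b_i`. -/
def eB {m : ℕ} (μb : Fin m → ℝ) (c : ℝ) (ω : (Fin m × Bool) → ℝ) : ℝ :=
  ∑ i, xSign c ω i * μb i

/-- `f(c) = (c e_a(c) + e_b(c))/(1+c)`. -/
def fFun {m : ℕ} (μa μb : Fin m → ℝ) (c : ℝ) (ω : (Fin m × Bool) → ℝ) : ℝ :=
  (c * eA μa c ω + eB μb c ω) / (1 + c)

/-- `e'_a(c) = −∑ i x_i(c) v^a_i`. -/
def eA' {m : ℕ} (c : ℝ) (ω : (Fin m × Bool) → ℝ) : ℝ :=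
  -∑ i, xSign c ω i * ω (i, true)

/-- `e'_b(c) = ∑ i x_i(c) v^b_i`. -/
def eB' {m : ℕ} (c : ℝ) (ω : (Fin m × Bool) → ℝ) : ℝ :=
  ∑ i, xSign c ω i * ω (i, false)

/-- `g(c) = (e_a(c) − e'_a(c) − c e_b(c) + c e'_b(c))/(1+c)`. -/
def gFun {m : ℕ} (μa μb : Fin m → ℝ) (c : ℝ) (ω : (Fin m × Bool) → ℝ) : ℝ :=
  (eA μa c ω - eA' c ω - c * eB μb c ω + c * eB' c ω) / (1 + c)

section IndependentGaussians

variable {Ω : Type*} {mΩ : MeasurableSpace Ω} {P : Measure Ω}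

lemma iIndepFun_curry {ι κ E : Type*} {mE : MeasurableSpace E} {X : ι × κ → Ω → E}
    (hX : iIndepFun X P) (mX : ∀ p, Measurable (X p)) :
    iIndepFun (fun i ω j ↦ X (i, j) ω) P := by
  have := hX.isProbabilityMeasure
  have (p : ι × κ) : IsProbabilityMeasure (P.map (X p)) :=
    Measure.isProbabilityMeasure_map (mX p).aemeasurable
  have block_law (i : ι) :
      P.map (fun ω j ↦ X (i, j) ω) = Measure.infinitePi fun j ↦ P.map (X (i, j)) :=
    (iIndepFun_iff_map_fun_eq_infinitePi_map fun j ↦ mX (i, j)).1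
      (hX.precomp (Prod.mk_right_injective i))
  rw [iIndepFun_iff_map_fun_eq_infinitePi_map (by fun_prop)]
  calc P.map (fun ω i j ↦ X (i, j) ω)
      = (P.map fun ω p ↦ X p ω).map (MeasurableEquiv.curry ι κ E) :=
        (Measure.map_map (MeasurableEquiv.curry ι κ E).measurable
          (measurable_pi_lambda (fun ω p ↦ X p ω) mX)).symm
    _ = Measure.infinitePi fun i ↦ Measure.infinitePi fun j ↦ P.map (X (i, j)) := by
        rw [(iIndepFun_iff_map_fun_eq_infinitePi_map mX).1 hX]
        exact Measure.infinitePi_map_curry fun i j ↦ P.map (X (i, j))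
    _ = Measure.infinitePi fun i ↦ P.map (fun ω j ↦ X (i, j) ω) := by simp only [block_law]

lemma hasLaw_sum_gaussianReal {ι : Type*} [Fintype ι] {X : ι → Ω → ℝ} {μ : ι → ℝ} {v : ι → ℝ≥0}
    (hX : ∀ i, HasLaw (X i) (gaussianReal (μ i) (v i)) P) (hind : iIndepFun X P) :
    HasLaw (fun ω ↦ ∑ i, X i ω) (gaussianReal (∑ i, μ i) (∑ i, v i)) P where
  aemeasurable := Finset.aemeasurable_fun_sum _ fun i _ ↦ (hX i).aemeasurable
  map_eq := by
    have := hind.isProbabilityMeasure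
    refine Measure.ext_of_charFun (funext fun t ↦ ?_)
    rw [hind.charFun_map_fun_sum_eq_prod fun i ↦ (hX i).aemeasurable, Finset.prod_apply]
    simp only [(hX _).map_eq, charFun_gaussianReal, ← Complex.exp_sum]
    push_cast
    simp only [Finset.sum_sub_distrib, Finset.mul_sum, Finset.sum_mul, Finset.sum_div]

/-- `(cX - Y, X + cY)` is, up to scaling, a rotation of `(X, Y)`. -/
lemma indepFun_const_mul_sub_add_const_mul {X Y : Ω → ℝ} (hX : HasGaussianLaw X P)
    (hY : HasGaussianLaw Y P) (hXY : IndepFun X Y P) (hvar : Var[X; P] = Var[Y; P]) (c : ℝ) :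
    IndepFun (fun ω ↦ c * X ω - Y ω) (fun ω ↦ X ω + c * Y ω) P := by
  have hX2 : MemLp X 2 P := hX.memLp_two
  have hY2 : MemLp Y 2 P := hY.memLp_two
  have hW2 : MemLp (fun ω ↦ X ω + c * Y ω) 2 P := hX2.add (hY2.const_mul c)
  let L : ℝ × ℝ →L[ℝ] ℝ × ℝ :=
    (c • ContinuousLinearMap.fst ℝ ℝ ℝ - ContinuousLinearMap.snd ℝ ℝ ℝ).prod
      (ContinuousLinearMap.fst ℝ ℝ ℝ + c • ContinuousLinearMap.snd ℝ ℝ ℝ)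
  refine HasGaussianLaw.indepFun_of_covariance_eq_zero ((hXY.hasGaussianLaw hX hY).map_fun L) ?_
  have := hX.isProbabilityMeasure
  have cov_XY : cov[X, Y; P] = 0 := hXY.covariance_eq_zero hX2 hY2
  have cov_YX : cov[Y, X; P] = 0 := covariance_comm Y X ▸ cov_XY
  have cov_add_right {Z : Ω → ℝ} (hZ : MemLp Z 2 P) :
      cov[Z, fun ω ↦ X ω + c * Y ω; P] = cov[Z, X; P] + c * cov[Z, Y; P] :=
    (covariance_add_right hZ hX2 (hY2.const_mul c)).trans (by rw [covariance_const_mul_right])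
  rw [covariance_fun_sub_left (hX2.const_mul c) hY2 hW2, covariance_const_mul_left,
    cov_add_right hX2, cov_add_right hY2, cov_XY, cov_YX, covariance_self hX2.aemeasurable,
    covariance_self hY2.aemeasurable, hvar]
  ring

lemma hasLaw_comp_of_indepFun {α β γ : Type*} {mα : MeasurableSpace α} {mβ : MeasurableSpace β}
    {mγ : MeasurableSpace γ} [IsProbabilityMeasure P] {U : Ω → α} {Z : Ω → β} {g : α → β → γ}
    {μ : Measure β} {ν : Measure γ} (hU : AEMeasurable U P) (hZ : HasLaw Z μ P)
    (hUZ : IndepFun U Z P) (hg : Measurable (Function.uncurry g))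
    (hmap : ∀ᵐ u ∂P.map U, μ.map (g u) = ν) :
    HasLaw (fun ω ↦ g (U ω) (Z ω)) ν P := by
  have := Measure.isProbabilityMeasure_map hU
  have : IsProbabilityMeasure μ := hZ.map_eq ▸ Measure.isProbabilityMeasure_map hZ.aemeasurable
  have : SFinite ν := by
    obtain ⟨u, hu⟩ := hmap.exists
    exact hu ▸ inferInstance
  have joint : HasLaw (fun ω ↦ (U ω, Z ω)) ((P.map U).prod μ) P :=
    ⟨hU.prodMk hZ.aemeasurable, by
      rw [(indepFun_iff_map_prod_eq_prod_map_map hU hZ.aemeasurable).1 hUZ, hZ.map_eq]⟩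
  exact (measurePreserving_snd.comp
    ((MeasurePreserving.id (P.map U)).skew_product hg hmap)).hasLaw.comp joint

lemma hasLaw_mul_of_eq_one_or_neg_one [IsProbabilityMeasure P] {S Z : Ω → ℝ} {μ : Measure ℝ}
    [μ.IsNegInvariant] (hS : AEMeasurable S P) (hS_sign : ∀ᵐ ω ∂P, S ω = 1 ∨ S ω = -1)
    (hZ : HasLaw Z μ P) (hSZ : IndepFun S Z P) :
    HasLaw (fun ω ↦ S ω * Z ω) μ P := by
  refine hasLaw_comp_of_indepFun hS hZ hSZ (g := (· * ·)) measurable_mul ?_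
  have law_sign : ∀ᵐ s ∂P.map S, s = 1 ∨ s = -1 :=
    (ae_map_iff hS (Set.toFinite {1, -1}).measurableSet).2 hS_sign
  filter_upwards [law_sign] with s hs
  rcases hs with rfl | rfl
  · simp
  · simp [Measure.map_neg_eq_self]

instance isNegInvariant_gaussianReal_zero (v : ℝ≥0) : (gaussianReal 0 v).IsNegInvariant where
  neg_eq_self := by simp [Measure.neg, gaussianReal_map_neg]

end IndependentGaussians

section SubGaussian

variable {Ω : Type*} {mΩ : MeasurableSpace Ω} {P : Measure Ω}

lemma hasSubgaussianMGF_of_hasLaw_gaussianReal {X : Ω → ℝ} {v : ℝ≥0}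
    (hX : HasLaw X (gaussianReal 0 v) P) : HasSubgaussianMGF X v P := by
  rw [← HasSubgaussianMGF.id_map_iff hX.aemeasurable, hX.map_eq]
  exact ⟨integrable_exp_mul_gaussianReal, fun t ↦ by simp [mgf_id_gaussianReal]⟩

lemma hasSubgaussianMGF_mono {X : Ω → ℝ} {v w : ℝ≥0} (hX : HasSubgaussianMGF X v P)
    (hvw : v ≤ w) : HasSubgaussianMGF X w P where
  integrable_exp_mul := hX.integrable_exp_mul
  mgf_le t := (hX.mgf_le t).trans (by gcongr)

lemma measureReal_le_abs_le_of_hasSubgaussianMGF {X : Ω → ℝ} {v : ℝ≥0}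
    (hX : HasSubgaussianMGF X v P) {ε : ℝ} (hε : 0 ≤ ε) :
    P.real {ω | ε ≤ |X ω|} ≤ 2 * exp (-ε ^ 2 / (2 * v)) := by
  have split : {ω | ε ≤ |X ω|} = {ω | ε ≤ X ω} ∪ {ω | ε ≤ (-X) ω} := by
    ext ω
    exact le_abs (a := ε) (b := X ω)
  calc P.real {ω | ε ≤ |X ω|}
      ≤ P.real {ω | ε ≤ X ω} + P.real {ω | ε ≤ (-X) ω} := split ▸ measureReal_union_le _ _
    _ ≤ exp (-ε ^ 2 / (2 * v)) + exp (-ε ^ 2 / (2 * v)) :=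
        add_le_add (hX.measure_ge_le hε) (hX.neg.measure_ge_le hε)
    _ = 2 * exp (-ε ^ 2 / (2 * v)) := (two_mul _).symm

lemma ofReal_one_sub_le_measure_forall_abs_le [IsProbabilityMeasure P] {κ : Type*} {s : Finset κ}
    {X : κ → Ω → ℝ} {v : ℝ≥0} (hX : ∀ k ∈ s, HasSubgaussianMGF (X k) v P) {ε : ℝ} (hε : 0 ≤ ε) :
    ENNReal.ofReal (1 - 2 * s.card * exp (-ε ^ 2 / (2 * v))) ≤
      P {ω | ∀ k ∈ s, |X k ω| ≤ ε} := by
  set good := {ω | ∀ k ∈ s, |X k ω| ≤ ε}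
  have compl_subset : goodᶜ ⊆ ⋃ k ∈ s, {ω | ε ≤ |X k ω|} := by
    intro ω hω
    obtain ⟨k, hk, hlt⟩ : ∃ k ∈ s, ε < |X k ω| := by simpa [good] using hω
    exact Set.mem_biUnion hk hlt.le
  have compl_le : P.real goodᶜ ≤ 2 * s.card * exp (-ε ^ 2 / (2 * v)) :=
    calc P.real goodᶜ
        ≤ ∑ k ∈ s, P.real {ω | ε ≤ |X k ω|} :=
          (measureReal_mono compl_subset (measure_ne_top P _)).trans
            (measureReal_biUnion_finset_le _ _)
      _ ≤ s.card • (2 * exp (-ε ^ 2 / (2 * v))) :=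
          Finset.sum_le_card_nsmul _ _ _ fun k hk ↦
            measureReal_le_abs_le_of_hasSubgaussianMGF (hX k hk) hε
      _ = 2 * s.card * exp (-ε ^ 2 / (2 * v)) := by rw [nsmul_eq_mul]; ring
  have one_le : 1 ≤ P.real good + P.real goodᶜ := by
    simpa using measureReal_union_le (μ := P) good goodᶜ
  rw [← ofReal_measureReal]
  exact ENNReal.ofReal_le_ofReal (by linarith)

end SubGaussian

section ThresholdingModel

variable {m : ℕ} (q : ℕ) (μa μb : Fin m → ℝ) (c : ℝ) (i : Fin m)

instance isProbabilityMeasure_threshMeasure : IsProbabilityMeasure (threshMeasure m q μa μb) := by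
  unfold threshMeasure
  infer_instance

lemma hasLaw_threshMeasure_eval (p : Fin m × Bool) :
    HasLaw (fun ω : Fin m × Bool → ℝ ↦ ω p)
      (gaussianReal (if p.2 then μa p.1 else μb p.1) (m / q)) (threshMeasure m q μa μb) :=
  (measurePreserving_eval (fun p : Fin m × Bool ↦
    gaussianReal (if p.2 then μa p.1 else μb p.1) (m / q)) p).hasLaw

lemma iIndepFun_threshMeasure_eval :
    iIndepFun (fun (p : Fin m × Bool) (ω : Fin m × Bool → ℝ) ↦ ω p)
      (threshMeasure m q μa μb) :=
  iIndepFun_pi (X := fun _ ↦ id) fun _ ↦ aemeasurable_id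

/-- The contribution `x_i(c) (W_i - E[W_i])`, with `W_i = v^a_i + c v^b_i`, of item `i` to
`(1 + c) g(c)`. -/
def itemError (ω : Fin m × Bool → ℝ) : ℝ :=
  xSign c ω i * ((ω (i, true) - μa i) + c * (ω (i, false) - μb i))

lemma gFun_eq_sum_itemError_div :
    gFun μa μb c = fun ω ↦ (∑ i, itemError μa μb c i ω) / (1 + c) := by
  ext ω
  simp only [gFun, eA, eA', eB, eB', itemError, Finset.mul_sum, ← Finset.sum_neg_distrib,
    ← Finset.sum_sub_distrib, ← Finset.sum_add_distrib]
  congr! 2 with i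
  ring

lemma measurable_xSign : Measurable fun ω : Fin m × Bool → ℝ ↦ xSign c ω i :=
  Measurable.ite (measurableSet_lt measurable_const (by fun_prop)) measurable_const
    measurable_const

lemma xSign_eq_one_or_neg_one (ω : Fin m × Bool → ℝ) : xSign c ω i = 1 ∨ xSign c ω i = -1 :=
  ite_eq_or_eq _ _ _

lemma iIndepFun_itemError : iIndepFun (itemError μa μb c) (threshMeasure m q μa μb) := by
  have blocks := iIndepFun_curry (iIndepFun_threshMeasure_eval q μa μb) measurable_pi_apply
  refine blocks.comp (fun i y ↦ (if 0 < c * y true - y false then 1 else -1) *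
    ((y true - μa i) + c * (y false - μb i))) fun i ↦ ?_
  exact (Measurable.ite (measurableSet_lt measurable_const (by fun_prop)) measurable_const
    measurable_const).mul (by fun_prop)

lemma indepFun_estimates :
    IndepFun (fun ω : Fin m × Bool → ℝ ↦ ω (i, true)) (fun ω ↦ ω (i, false))
      (threshMeasure m q μa μb) :=
  (iIndepFun_threshMeasure_eval q μa μb).indepFun (by simp)

lemma indepFun_xSign :
    IndepFun (fun ω : Fin m × Bool → ℝ ↦ xSign c ω i)
      (fun ω ↦ (ω (i, true) - μa i) + c * (ω (i, false) - μb i)) (threshMeasure m q μa μb) := by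
  have ha := hasLaw_threshMeasure_eval q μa μb (i, true)
  have hb := hasLaw_threshMeasure_eval q μa μb (i, false)
  have rotated := indepFun_const_mul_sub_add_const_mul ha.hasGaussianLaw hb.hasGaussianLaw
    (indepFun_estimates q μa μb i)
    (by rw [ha.variance_eq, hb.variance_eq, variance_id_gaussianReal, variance_id_gaussianReal]) c
  have sign_measurable : Measurable fun u : ℝ ↦ if 0 < u then (1 : ℝ) else -1 :=
    Measurable.ite measurableSet_Ioi measurable_const measurable_const
  convert rotated.comp sign_measurable (measurable_id.sub_const (μa i + c * μb i)) using 1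
  · ext ω
    simp only [xSign, Function.comp_apply]
  · ext ω
    simp only [Function.comp_apply, id]
    ring

lemma hasLaw_itemError :
    HasLaw (itemError μa μb c i) (gaussianReal 0 ((1 + .mk (c ^ 2) (sq_nonneg c)) * (m / q)))
      (threshMeasure m q μa μb) := by
  have ha : HasLaw (fun ω : Fin m × Bool → ℝ ↦ ω (i, true) - μa i) (gaussianReal 0 (m / q))
      (threshMeasure m q μa μb) := by
    simpa using gaussianReal_sub_const (hasLaw_threshMeasure_eval q μa μb (i, true)) (μa i)
  have hb : HasLaw (fun ω : Fin m × Bool → ℝ ↦ c * (ω (i, false) - μb i))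
      (gaussianReal 0 (.mk (c ^ 2) (sq_nonneg c) * (m / q))) (threshMeasure m q μa μb) := by
    simpa using gaussianReal_const_mul
      (gaussianReal_sub_const (hasLaw_threshMeasure_eval q μa μb (i, false)) (μb i)) c
  have hab : IndepFun (fun ω : Fin m × Bool → ℝ ↦ ω (i, true) - μa i)
      (fun ω ↦ c * (ω (i, false) - μb i)) (threshMeasure m q μa μb) :=
    (indepFun_estimates q μa μb i).comp (measurable_id.sub_const _)
      ((measurable_id.sub_const _).const_mul c)
  refine hasLaw_mul_of_eq_one_or_neg_one (measurable_xSign c i).aemeasurable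
    (ae_of_all _ (xSign_eq_one_or_neg_one c i))
    ⟨ha.aemeasurable.add hb.aemeasurable, ?_⟩ (indepFun_xSign q μa μb c i)
  refine (gaussianReal_add_gaussianReal_of_indepFun hab ha.map_eq hb.map_eq).trans ?_
  rw [add_zero, one_add_mul]

lemma hasLaw_gFun :
    HasLaw (gFun μa μb c)
      (gaussianReal 0 ((m : ℝ) ^ 2 / q * ((1 + c ^ 2) / (1 + c) ^ 2)).toNNReal)
      (threshMeasure m q μa μb) := by
  have law := gaussianReal_div_const (hasLaw_sum_gaussianReal
    (fun i ↦ hasLaw_itemError q μa μb c i) (iIndepFun_itemError q μa μb c)) (1 + c)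
  rw [gFun_eq_sum_itemError_div]
  convert law using 2
  · simp
  · ext
    rw [Real.coe_toNNReal _ (by positivity)]
    simp only [Finset.sum_const, Finset.card_univ, Fintype.card_fin, nsmul_eq_mul, NNReal.coe_div,
      NNReal.coe_mul, NNReal.coe_natCast, NNReal.coe_add, NNReal.coe_one, NNReal.coe_mk]
    ring

lemma hasSubgaussianMGF_gFun {c : ℝ} (hc : 0 ≤ c) :
    HasSubgaussianMGF (gFun μa μb c) (m ^ 2 / q) (threshMeasure m q μa μb) := by
  refine hasSubgaussianMGF_mono
    (hasSubgaussianMGF_of_hasLaw_gaussianReal (hasLaw_gFun q μa μb c)) ?_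
  have ratio_le_one : (1 + c ^ 2) / (1 + c) ^ 2 ≤ 1 := by
    rw [div_le_one (by positivity)]
    nlinarith
  rw [Real.toNNReal_le_iff_le_coe]
  push_cast
  exact mul_le_of_le_one_right (by positivity) ratio_le_one

end ThresholdingModel

theorem stmt13_general {m : ℕ} (μa μb : Fin m → ℝ) (q : ℕ) (hq : 1 ≤ q) :
    (∀ c : ℝ, c ≠ -1 →
        Measure.map (gFun μa μb c) (threshMeasure m q μa μb) =
          gaussianReal 0 ((m : ℝ) ^ 2 / q * ((1 + c ^ 2) / (1 + c) ^ 2)).toNNReal) ∧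
      ENNReal.ofReal (1 - 2 * m ^ 6 * Real.exp (-Real.log m ^ 2 / 2)) ≤
        threshMeasure m q μa μb
          {ω | ∀ k : ℕ, 1 ≤ k → k ≤ m ^ 6 →
              |gFun μa μb ((k : ℝ) / (m : ℝ) ^ 3) ω| ≤ (m / Real.sqrt q) * Real.log m} := by
  refine ⟨fun c _ ↦ (hasLaw_gFun q μa μb c).map_eq, ?_⟩
  have threshold_nonneg : 0 ≤ m / √q * log m := by positivity
  have exponent : -(m / √q * log m) ^ 2 / (2 * (m ^ 2 / q : ℝ≥0)) = -log m ^ 2 / 2 := by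
    rcases eq_or_ne m 0 with rfl | hm
    · simp
    · push_cast
      rw [mul_pow, div_pow, Real.sq_sqrt (by positivity)]
      field_simp
  have grid_bound := ofReal_one_sub_le_measure_forall_abs_le (s := Finset.Icc 1 (m ^ 6))
    (fun k _ ↦ hasSubgaussianMGF_gFun q μa μb (by positivity : (0 : ℝ) ≤ k / m ^ 3))
    threshold_nonneg
  simpa only [exponent, Nat.card_Icc, add_tsub_cancel_right, Nat.cast_pow, Finset.mem_Icc,
    and_imp] using grid_bound

/-- in the thresholding allocation model, for every `c > 0` the random variable
`g(c)` is distributed as `N(0, (m²/q)(1+c²)/(1+c)²)`; consequently, with probability at least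
`1 − 2 m⁶ exp(−(log m)²/2)`, simultaneously for all grid values `c = k/m³` (`k = 1, …, m⁶`),
`|g(c)| ≤ (m/√q) log m`. -/
theorem stmt13 {m : ℕ} (μa μb : Fin m → ℝ)
    (hμa : ∀ i, μa i ∈ Set.Icc (0 : ℝ) 1) (hμb : ∀ i, μb i ∈ Set.Icc (0 : ℝ) 1)
    (q : ℕ) (hq : 1 ≤ q) :
    (∀ c : ℝ, 0 < c →
        Measure.map (gFun μa μb c) (threshMeasure m q μa μb) =
          gaussianReal 0 ((m : ℝ) ^ 2 / q * ((1 + c ^ 2) / (1 + c) ^ 2)).toNNReal) ∧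
      ENNReal.ofReal (1 - 2 * m ^ 6 * Real.exp (-Real.log m ^ 2 / 2)) ≤
        threshMeasure m q μa μb
          {ω | ∀ k : ℕ, 1 ≤ k → k ≤ m ^ 6 →
              |gFun μa μb ((k : ℝ) / (m : ℝ) ^ 3) ω| ≤ (m / Real.sqrt q) * Real.log m} :=
  have general := stmt13_general μa μb q hq
  ⟨fun c hc ↦ general.1 c (by linarith), general.2⟩
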